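/- arXiv:gr-qc/0010008 — 2 statements merged into one kernel-verified Lean document; each statement's English description precedes it below -/
import Mathlib

section
/- For each fixed even integer m ≥ 2 there exists a constant φ(m) ∈ (0, ∞) such that C₀(N,m) · N^(5/2) · (27/2)^(−N/2) → φ(m) as N → ∞ along even integers; i.e. C₀(N,m) ∼ φ(m) · N^(−5/2) · c^N with c = 3·√(3/2). -/
open Filter Real MeasureTheory

/-- Number of rooted quasitriangulations of a sphere with a hole with `N` triangles and
`m` boundary edges (Goulden–Jackson), with `j = (N - m)/2`. -/
noncomputable def C0 (N m : ℕ) : ℝ :=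
  (2 : ℝ) ^ ((N - m) / 2 + 2) * (Nat.factorial (2 * m + 3 * ((N - m) / 2) - 1) : ℝ) *
    (Nat.factorial (2 * m - 3) : ℝ) /
    ((Nat.factorial ((N - m) / 2 + 1) : ℝ) * (Nat.factorial (2 * m + 2 * ((N - m) / 2)) : ℝ) *
      ((Nat.factorial (m - 2) : ℝ)) ^ 2)

/-- The filter "N → ∞ along even integers". -/
def evenAtTop : Filter ℕ := Filter.atTop ⊓ Filter.principal {N | Even N}

/-!
Write `N = m + 2 j`. Up to a constant, `C₀(N, m)` is `2 ^ j` times the factorial quotient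
`(3 j + 2 m - 1)! / ((j + 1)! (2 j + 2 m)!)`. Removing the bounded shifts from the three factorials
leaves `(3 j).choose j` times a multiple of `j ^ (2 m - 1) / j ^ (2 m + 1) = j ^ (-2)`, and
the Stirling formula gives `(3 j).choose j ∼ √(3 / (4 π j)) (27/4) ^ j`. Hence the exponential rate
is `2 · 27/4 = 27/2` per unit of `j = (N - m) / 2`, and the exponent `5/2` is `2 + 1/2`.
-/

open Asymptotics Topology

section

-- This notation makes `φ` a token (the Euler totient), so it must not reach the final theorem.
open scoped Nat

lemma isEquivalent_natCast_add (a : ℕ) :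
    (fun n : ℕ ↦ ((n + a : ℕ) : ℝ)) ~[atTop] fun n ↦ (n : ℝ) := by
  simp only [Nat.cast_add]
  exact IsEquivalent.refl.add_const_of_norm_tendsto_atTop
    (tendsto_norm_atTop_atTop.comp tendsto_natCast_atTop_atTop)

lemma isEquivalent_add_mul_rpow (m : ℕ) {k : ℕ} (hk : 0 < k) (r : ℝ) :
    (fun j : ℕ ↦ ((m + k * j : ℕ) : ℝ) ^ r) ~[atTop] fun j ↦ (k * j : ℝ) ^ r := by
  have base_equiv : (fun j : ℕ ↦ ((m + k * j : ℕ) : ℝ)) ~[atTop] fun j ↦ (k * j : ℝ) := by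
    simpa only [Function.comp_def, add_comm m, id_eq, Nat.cast_mul] using
      (isEquivalent_natCast_add m).comp_tendsto (tendsto_id.const_mul_atTop' hk)
  exact base_equiv.rpow fun j ↦ by positivity

lemma isEquivalent_factorial_add (a : ℕ) :
    (fun n : ℕ ↦ ((n + a)! : ℝ)) ~[atTop] fun n ↦ (n ! : ℝ) * (n : ℝ) ^ a := by
  have factorial_eq (n : ℕ) : ((n + a)! : ℝ) = n ! * (n + a).descFactorial a := by
    rw [← Nat.factorial_mul_descFactorial (Nat.le_add_left a n), Nat.add_sub_cancel, Nat.cast_mul]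
  have descFactorial_equiv :
      (fun n : ℕ ↦ ((n + a).descFactorial a : ℝ)) ~[atTop] fun n ↦ (n : ℝ) ^ a :=
    ((isEquivalent_descFactorial a).comp_tendsto (tendsto_add_atTop_nat a)).trans
      ((isEquivalent_natCast_add a).pow a)
  simp only [factorial_eq]
  exact IsEquivalent.refl.mul descFactorial_equiv

section TwoSequences

variable {α : Type*} {l : Filter α} {f g : α → ℕ}

lemma isEquivalent_add_choose_stirling (hf : Tendsto f l atTop) (hg : Tendsto g l atTop) :
    (fun x ↦ ((f x + g x).choose (f x) : ℝ)) ~[l] fun x ↦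
      √((f x + g x) / (2 * π * f x * g x)) *
        ((f x + g x) ^ (f x + g x) / (f x ^ f x * g x ^ g x)) := by
  have stirling := Stirling.factorial_isEquivalent_stirling
  have quotient := (stirling.comp_tendsto (hf.atTop_add_atTop hg)).div
    ((stirling.comp_tendsto hf).mul (stirling.comp_tendsto hg))
  refine (quotient.congr_left (.of_eq ?_)).congr_right ?_
  · ext x
    simp [Nat.cast_add_choose]
  · filter_upwards [hf.eventually_gt_atTop 0, hg.eventually_gt_atTop 0] with x hfx hgx
    have sqrt_quotient : √(2 * (f x + g x : ℝ) * π) / (√(2 * f x * π) * √(2 * g x * π)) =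
        √((f x + g x) / (2 * π * f x * g x)) := by
      rw [← Real.sqrt_mul (by positivity), ← Real.sqrt_div (by positivity)]
      congr 1
      field_simp
    simp only [Pi.div_apply, Pi.mul_apply, Function.comp_apply, Nat.cast_add, div_pow]
    rw [← sqrt_quotient, pow_add (rexp 1)]
    field_simp

lemma isEquivalent_factorial_add_div (hf : Tendsto f l atTop) (hg : Tendsto g l atTop)
    (a b c : ℕ) :
    (fun x ↦ ((f x + g x + a)! : ℝ) / ((f x + b)! * (g x + c)!)) ~[l] fun x ↦
      ((f x + g x).choose (f x) : ℝ) * ((f x + g x) ^ a / (f x ^ b * g x ^ c)) := by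
  have quotient := ((isEquivalent_factorial_add a).comp_tendsto (hf.atTop_add_atTop hg)).div
    (((isEquivalent_factorial_add b).comp_tendsto hf).mul
      ((isEquivalent_factorial_add c).comp_tendsto hg))
  refine quotient.congr_right (.of_eq ?_)
  ext x
  simp only [Pi.div_apply, Pi.mul_apply, Function.comp_apply, Nat.cast_add_choose, Nat.cast_add]
  field_simp

end TwoSequences

lemma isEquivalent_choose_mul {a b : ℕ} (ha : 0 < a) (hb : 0 < b) :
    (fun n : ℕ ↦ ((a * n + b * n).choose (a * n) : ℝ)) ~[atTop] fun n ↦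
      √((a + b) / (2 * π * a * b * n)) * ((a + b) ^ (a + b) / (a ^ a * b ^ b) : ℝ) ^ n := by
  refine (isEquivalent_add_choose_stirling (tendsto_id.const_mul_atTop' ha)
    (tendsto_id.const_mul_atTop' hb)).congr_right ?_
  filter_upwards [eventually_gt_atTop 0] with n hn
  simp only [id_eq, Nat.cast_mul]
  congr 1
  · congr 1
    field_simp
  · rw [← add_mul, ← add_mul, mul_pow, mul_pow, mul_pow, add_mul a b n, pow_add (n : ℝ), div_pow,
      mul_pow, ← pow_mul, ← pow_mul, ← pow_mul, add_mul a b n]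
    field_simp

lemma map_add_mul_atTop_eq_modEq (m : ℕ) {k : ℕ} (hk : 0 < k) :
    map (fun j : ℕ ↦ m + k * j) atTop = atTop ⊓ 𝓟 {N | N ≡ m [MOD k]} := by
  refine le_antisymm (le_inf ?_ ?_) fun s hs ↦ ?_
  · exact Tendsto.nonneg_add_atTop (fun _ ↦ Nat.zero_le m) (tendsto_id.const_mul_atTop' hk)
  · exact tendsto_principal.2 (.of_forall fun j ↦ by simp [Nat.ModEq])
  · obtain ⟨J, hJ⟩ := mem_atTop_sets.1 (mem_map.1 hs)
    rw [mem_inf_principal]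
    filter_upwards [eventually_ge_atTop (m + k * J)] with N hN hmod
    obtain ⟨j, hj⟩ := (Nat.modEq_iff_dvd' (le_of_add_le_left hN)).1 hmod.symm
    obtain rfl : N = m + k * j := by lia
    exact hJ j (Nat.le_of_mul_le_mul_left (Nat.le_of_add_le_add_left hN) hk)

lemma evenAtTop_eq_modEq_two {m : ℕ} (hm : Even m) :
    evenAtTop = atTop ⊓ 𝓟 {N | N ≡ m [MOD 2]} := by
  simp only [evenAtTop, Nat.ModEq, Nat.even_iff.1 hm, Nat.even_iff]

/-- The constant `φ(m)` in the asymptotics `C₀(N, m) ∼ φ(m) N ^ (-5/2) (27/2) ^ (N/2)`,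
meaningful for `2 ≤ m` only because of the truncated subtractions. -/
noncomputable def C0Limit (m : ℕ) : ℝ :=
  8 / 3 * √(6 / π) * ((2 * m - 3)! / (m - 2)! ^ 2) * (3 / 8 : ℝ) ^ ((m : ℝ) / 2)

lemma C0Limit_pos (m : ℕ) : 0 < C0Limit m := by
  unfold C0Limit
  positivity

lemma C0Limit_eq_mul_rpow_neg (m : ℕ) :
    C0Limit m = 4 / 3 * (9 / 4) ^ m * ((2 * m - 3)! / (m - 2)! ^ 2) *
      (√3 / (2 * √π)) * (4 * √2) * (27 / 2 : ℝ) ^ (-(m : ℝ) / 2) := by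
  have sqrt_six_div_pi : √(6 / π) = √2 * √3 / √π := by
    rw [← Real.sqrt_mul two_pos.le, ← Real.sqrt_div (by positivity)]
    norm_num
  have nine_fourths_pow : (9 / 4 : ℝ) ^ m = (81 / 16) ^ ((m : ℝ) / 2) := by
    rw [← Real.rpow_natCast, show (81 / 16 : ℝ) = (9 / 4) ^ 2 by norm_num,
      ← Real.rpow_natCast_mul (by norm_num), Nat.cast_ofNat, mul_div_cancel₀ _ two_ne_zero]
  have boundary_factor :
      (3 / 8 : ℝ) ^ ((m : ℝ) / 2) = (9 / 4) ^ m * (27 / 2) ^ (-(m : ℝ) / 2) := by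
    rw [nine_fourths_pow, neg_div, Real.rpow_neg (by norm_num), ← div_eq_mul_inv,
      ← Real.div_rpow (by norm_num) (by norm_num)]
    norm_num
  rw [C0Limit, boundary_factor, sqrt_six_div_pi]
  ring

lemma C0_add_two_mul {m : ℕ} (hm : 2 ≤ m) (j : ℕ) :
    C0 (m + 2 * j) m = 4 * ((2 * m - 3)! / (m - 2)! ^ 2) * 2 ^ j *
      ((j + 2 * j + (2 * m - 1))! / ((j + 1)! * (2 * j + 2 * m)!)) := by
  have half_sub : (m + 2 * j - m) / 2 = j := by lia
  have top_index : 2 * m + 3 * j - 1 = j + 2 * j + (2 * m - 1) := by lia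
  rw [C0, half_sub, top_index, add_comm (2 * m) (2 * j)]
  ring

lemma isEquivalent_C0_add_two_mul {m : ℕ} (hm : 2 ≤ m) :
    (fun j ↦ C0 (m + 2 * j) m) ~[atTop] fun j : ℕ ↦
      4 / 3 * (9 / 4) ^ m * ((2 * m - 3)! / (m - 2)! ^ 2) *
        (√(3 / (4 * π * j)) / j ^ 2 * (27 / 2) ^ j) := by
  have double_tendsto : Tendsto (fun j : ℕ ↦ 2 * j) atTop atTop :=
    tendsto_id.const_mul_atTop' two_pos
  have choose_equiv : (fun j : ℕ ↦ ((j + 2 * j).choose j : ℝ)) ~[atTop] fun j ↦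
      √(3 / (4 * π * j)) * (27 / 4) ^ j := by
    convert isEquivalent_choose_mul one_pos two_pos using 4 <;> norm_num
    ring
  have ratio_equiv :=
    (isEquivalent_factorial_add_div tendsto_id double_tendsto (2 * m - 1) 1 (2 * m)).trans
      (choose_equiv.mul .refl)
  simp only [C0_add_two_mul hm]
  refine (IsEquivalent.refl.mul ratio_equiv).congr_right ?_
  filter_upwards [eventually_gt_atTop 0] with j hj
  obtain ⟨d, hd⟩ : ∃ d, 2 * m = d + 1 := ⟨2 * m - 1, by lia⟩
  have nine_fourths : (9 / 4 : ℝ) ^ m = 3 ^ (2 * m) / 2 ^ (2 * m) := by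
    rw [pow_mul, pow_mul, ← div_pow]
    norm_num
  have two_mul_twentySeven_fourths : (27 / 2 : ℝ) ^ j = 2 ^ j * (27 / 4) ^ j := by
    rw [← mul_pow]
    norm_num
  simp only [Pi.mul_apply, nine_fourths, two_mul_twentySeven_fourths, hd, Nat.add_sub_cancel, id_eq,
    Nat.cast_mul, Nat.cast_ofNat]
  field_simp
  ring

lemma tendsto_C0_add_two_mul {m : ℕ} (hm : 2 ≤ m) :
    Tendsto (fun j : ℕ ↦ C0 (m + 2 * j) m * ((m + 2 * j : ℕ) : ℝ) ^ ((5 : ℝ) / 2) *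
      (27 / 2 : ℝ) ^ (-((m + 2 * j : ℕ) : ℝ) / 2)) atTop (𝓝 (C0Limit m)) := by
  refine IsEquivalent.tendsto_const ((((isEquivalent_C0_add_two_mul hm).mul
    (isEquivalent_add_mul_rpow m two_pos _)).mul .refl).congr_right ?_)
  filter_upwards [eventually_gt_atTop 0] with j hj
  have sqrt_eq : √(3 / (4 * π * j)) = √3 / (2 * √π * √j) := by
    rw [Real.sqrt_div (by positivity), Real.sqrt_mul (by positivity), Real.sqrt_mul (by positivity),
      show (4 : ℝ) = 2 ^ 2 by norm_num, Real.sqrt_sq two_pos.le]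
  have power_eq : ((2 : ℕ) * j : ℝ) ^ ((5 : ℝ) / 2) = 4 * √2 * (j ^ 2 * √j) := by
    rw [show (5 : ℝ) / 2 = (2 : ℕ) + 1 / 2 by norm_num, Real.rpow_add (by positivity),
      Real.rpow_natCast, ← Real.sqrt_eq_rpow, Nat.cast_ofNat, Real.sqrt_mul two_pos.le]
    ring
  have exponential_eq : (27 / 2 : ℝ) ^ (-((m + 2 * j : ℕ) : ℝ) / 2) =
      (27 / 2) ^ (-(m : ℝ) / 2) * ((27 / 2) ^ j)⁻¹ := by
    rw [← Real.rpow_natCast, ← Real.rpow_neg (by positivity), ← Real.rpow_add (by positivity)]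
    push_cast
    ring_nf
  simp only [Pi.mul_apply, sqrt_eq, power_eq, exponential_eq, C0Limit_eq_mul_rpow_neg,
    Function.const_apply]
  field_simp

end

theorem C0_asymptotics_general (m : ℕ) (h2 : 2 ≤ m) :
    Tendsto (fun N : ℕ ↦ C0 N m * (N : ℝ) ^ ((5 : ℝ) / 2) * (27 / 2 : ℝ) ^ (-(N : ℝ) / 2))
      (atTop ⊓ 𝓟 {N | N ≡ m [MOD 2]}) (𝓝 (C0Limit m)) := by
  rw [← map_add_mul_atTop_eq_modEq m two_pos]
  exact tendsto_map'_iff.2 (tendsto_C0_add_two_mul h2)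

/-- Polynomial correction: C₀(N,m) ~ φ(m) N^(-5/2) c^N with c = 3√(3/2), i.e.
C₀(N,m) N^(5/2) (27/2)^(-N/2) converges to some φ(m) ∈ (0,∞) along even N. -/
theorem C0_asymptotics (m : ℕ) (hm : Even m) (h2 : 2 ≤ m) :
    ∃ φ : ℝ, 0 < φ ∧
      Filter.Tendsto
        (fun N : ℕ => C0 N m * (N : ℝ) ^ ((5 : ℝ) / 2) * (27 / 2 : ℝ) ^ (-(N : ℝ) / 2))
        evenAtTop (nhds φ) := by
  exact ⟨C0Limit m, C0Limit_pos m, evenAtTop_eq_modEq_two hm ▸ C0_asymptotics_general m h2⟩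
end

section
/- Supercritical (elongated) phase: if μ₁ < log 6 then there exists ε > 0 such that P_{N,μ₁}({m : m ≥ εN}) → 1 as N → ∞ along even integers; i.e. the boundary length is of order N with probability tending to one. -/
open Filter Real MeasureTheory

/-- Weight of boundary length m: w_{μ₁}(N,m) = exp(-μ₁ m/2) C₀(N,m). -/
noncomputable def w (μ₁ : ℝ) (N m : ℕ) : ℝ := Real.exp (-μ₁ * m / 2) * C0 N m

/-- Normalizing constant Θ_N(μ₁) = Σ_{m even, 2 ≤ m ≤ N} w_{μ₁}(N,m). -/
noncomputable def Θ (μ₁ : ℝ) (N : ℕ) : ℝ :=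
  ∑ m ∈ (Finset.range (N + 1)).filter (fun m => Even m ∧ 2 ≤ m), w μ₁ N m

/-- Boundary-length distribution P_{N,μ₁}(m) = w_{μ₁}(N,m)/Θ_N(μ₁). -/
noncomputable def P (μ₁ : ℝ) (N m : ℕ) : ℝ := w μ₁ N m / Θ μ₁ N

open scoped Classical

/-!
Passing from boundary length `m` to `m + 2` multiplies `C₀(N, m)` by an explicit rational function
of `m` and `N`, which is at least `6 ((N - m) / (N + m))²`. If `μ₁ < log 6`, then for small `x > 0`
the weights therefore grow by a factor at least `r > 1` per step as long as `m ≤ x N`. Shifting by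
`2k` with `k = ⌊(x - ε) N / 2⌋` maps the lengths below `ε N` injectively to lengths at most `x N`
and multiplies each weight by at least `r ^ k`, so for `ε < x` the lengths below `ε N` have
probability at most `r ^ (-k)`, which tends to `0`.
-/

open Set Topology

theorem mul_sum_le_sum_of_injOn {ι κ R : Type*} [NonUnitalNonAssocSemiring R] [PartialOrder R]
    [IsOrderedAddMonoid R] {s : Finset ι} {t : Finset κ} {f : ι → R} {g : κ → R} {c : R}
    (e : ι → κ) (he : MapsTo e s t) (hinj : InjOn e s)
    (hfg : ∀ i ∈ s, c * f i ≤ g (e i)) (hg : ∀ j ∈ t, 0 ≤ g j) :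
    c * ∑ i ∈ s, f i ≤ ∑ j ∈ t, g j := by
  calc c * ∑ i ∈ s, f i = ∑ i ∈ s, c * f i := Finset.mul_sum ..
    _ ≤ ∑ i ∈ s, g (e i) := Finset.sum_le_sum hfg
    _ = ∑ j ∈ s.image e, g j := (Finset.sum_image hinj).symm
    _ ≤ ∑ j ∈ t, g j :=
      Finset.sum_le_sum_of_subset_of_nonneg (Finset.image_subset_iff.2 he) fun j hj _ => hg j hj

theorem C0_pos (N m : ℕ) : 0 < C0 N m := by
  unfold C0
  positivity

-- With `m = a + 2` and `N = m + 2j` all subtractions in `C0` disappear.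
theorem C0_add_two_add_two_mul (a j : ℕ) :
    C0 (a + 2 + 2 * j) (a + 2) =
      2 ^ (j + 2) * (2 * a + 3 * j + 3).factorial * (2 * a + 1).factorial /
        ((j + 1).factorial * (2 * a + 2 * j + 4).factorial * (a.factorial : ℝ) ^ 2) := by
  have hj : (a + 2 + 2 * j - (a + 2)) / 2 = j := by omega
  have hnum : 2 * (a + 2) + 3 * j - 1 = 2 * a + 3 * j + 3 := by omega
  have hden : 2 * (a + 2) + 2 * j = 2 * a + 2 * j + 4 := by omega
  rw [C0, hj, hnum, hden, show 2 * (a + 2) - 3 = 2 * a + 1 by omega, Nat.add_sub_cancel]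

theorem C0_add_two {N m : ℕ} (hm : 2 ≤ m) (hmN : m + 2 ≤ N) (hpar : m ≡ N [MOD 2]) :
    C0 N (m + 2) =
      (4 * m ^ 2 - 1) / (m * (m - 1)) *
        ((3 * N + m) * (N - m + 2) / (2 * (N + m + 1) * (N + m + 2))) * C0 N m := by
  obtain ⟨a, rfl⟩ := Nat.exists_eq_add_of_le' hm
  obtain ⟨j, rfl⟩ : ∃ j, N = a + 2 + 2 * (j + 1) := by
    unfold Nat.ModEq at hpar
    exact ⟨(N - (a + 4)) / 2, by omega⟩
  have hshift : C0 (a + 2 + 2 * (j + 1)) (a + 2 + 2) = C0 (a + 2 + 2 + 2 * j) (a + 2 + 2) := by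
    congr 1
    ring
  rw [hshift, C0_add_two_add_two_mul, C0_add_two_add_two_mul]
  simp only [mul_add, ← add_assoc, Nat.reduceMul, add_right_comm _ _ (3 * j),
    add_right_comm _ _ (2 * j), Nat.factorial_succ]
  push_cast
  have hm0 : (a : ℝ) + 2 - 1 ≠ 0 := by
    have : (0 : ℝ) ≤ a := a.cast_nonneg
    linarith
  field_simp
  ring

theorem C0_mul_le_C0_add_two {N m : ℕ} (hm : 2 ≤ m) (hmN : m + 2 ≤ N) (hpar : m ≡ N [MOD 2]) :
    6 * ((N - m) / (N + m)) ^ 2 * C0 N m ≤ C0 N (m + 2) := by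
  have hm' : (2 : ℝ) ≤ m := by exact_mod_cast hm
  have hmN' : (m : ℝ) + 2 ≤ N := by exact_mod_cast hmN
  have hsub : (0 : ℝ) < m - 1 := by linarith
  have hboundary : (4 : ℝ) ≤ (4 * m ^ 2 - 1) / (m * (m - 1)) := by
    rw [le_div_iff₀ (by positivity)]
    nlinarith
  have hbulk : (3 / 2 : ℝ) * ((N - m) / (N + m)) ^ 2 ≤
      (3 * N + m) * (N - m + 2) / (2 * (N + m + 1) * (N + m + 2)) := by
    have hfirst : (3 : ℝ) * ((N - m) / (N + m)) ≤ (3 * N + m) / (N + m + 1) := by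
      rw [← mul_div_assoc, div_le_div_iff₀ (by positivity) (by positivity)]
      nlinarith
    have hsecond : ((N - m) / (N + m) : ℝ) ≤ (N - m + 2) / (N + m + 2) := by
      rw [div_le_div_iff₀ (by positivity) (by positivity)]
      nlinarith
    have hratio : (0 : ℝ) ≤ (N - m) / (N + m) := div_nonneg (by linarith) (by positivity)
    calc (3 / 2 : ℝ) * ((N - m) / (N + m)) ^ 2
        = 1 / 2 * (3 * ((N - m) / (N + m)) * ((N - m) / (N + m))) := by ring
      _ ≤ 1 / 2 * ((3 * N + m) / (N + m + 1) * ((N - m + 2) / (N + m + 2))) := by gcongr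
      _ = (3 * N + m) * (N - m + 2) / (2 * (N + m + 1) * (N + m + 2)) := by
        field_simp
  rw [C0_add_two hm hmN hpar]
  refine mul_le_mul_of_nonneg_right ?_ (C0_pos N m).le
  calc (6 : ℝ) * ((N - m) / (N + m)) ^ 2 = 4 * (3 / 2 * ((N - m) / (N + m)) ^ 2) := by ring
    _ ≤ _ := by gcongr

/-- A lower bound for the ratio `w μ N (m + 2) / w μ N m` of consecutive weights when `m ≤ x * N`
and `x ≤ 1`. Its value at `x = 0` is `6 * exp (-μ)`, which exceeds `1` exactly when `μ < log 6`. -/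
noncomputable def growthRate (μ x : ℝ) : ℝ := 6 * exp (-μ) * ((1 - x) / (1 + x)) ^ 2

theorem growthRate_nonneg (μ x : ℝ) : 0 ≤ growthRate μ x := by
  unfold growthRate
  positivity

theorem growthRate_antitoneOn (μ : ℝ) : AntitoneOn (growthRate μ) (Ioc (-1) 1) := by
  rintro x ⟨hx, -⟩ y ⟨-, hy⟩ hxy
  have hnum : 0 ≤ 1 - x := by linarith
  have hden : 0 < 1 + x := by linarith
  have hratio : 0 ≤ (1 - y) / (1 + y) := div_nonneg (by linarith) (by linarith)
  unfold growthRate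
  gcongr

theorem exists_one_lt_growthRate {μ : ℝ} (hμ : μ < log 6) :
    ∃ x ∈ Ioo (0 : ℝ) 1, 1 < growthRate μ x := by
  have hzero : 1 < growthRate μ 0 := by
    have hexp : exp μ < 6 := (lt_log_iff_exp_lt (by norm_num)).1 hμ
    simpa [growthRate, exp_neg, ← div_eq_mul_inv, one_lt_div (exp_pos μ)] using hexp
  have hcont : ContinuousAt (growthRate μ) 0 := by
    unfold growthRate
    fun_prop (disch := norm_num)
  have hnear : ∀ᶠ x in 𝓝[>] (0 : ℝ), 1 < growthRate μ x :=
    (hcont.eventually_const_lt hzero).filter_mono nhdsWithin_le_nhds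
  obtain ⟨x, hgrowth, hx⟩ := (hnear.and (Ioo_mem_nhdsGT one_pos)).exists
  exact ⟨x, hx, hgrowth⟩

theorem w_pos (μ : ℝ) (N m : ℕ) : 0 < w μ N m :=
  mul_pos (exp_pos _) (C0_pos N m)

theorem growthRate_mul_w_le_w_add_two (μ : ℝ) {x : ℝ} {N m : ℕ} (hx : x ≤ 1) (hm : 2 ≤ m)
    (hmN : m + 2 ≤ N) (hpar : m ≡ N [MOD 2]) (hmx : m ≤ x * N) :
    growthRate μ x * w μ N m ≤ w μ N (m + 2) := by
  have hN : (0 : ℝ) < N := by exact_mod_cast (by omega : 0 < N)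
  have hmx' : (m / N : ℝ) ≤ x := (div_le_iff₀ hN).2 hmx
  have hfrac : (-1 : ℝ) < m / N := neg_one_lt_zero.trans_le (by positivity)
  have hrate : growthRate μ (m / N) = exp (-μ) * (6 * ((N - m) / (N + m)) ^ 2) := by
    unfold growthRate
    field_simp
  have hexp : exp (-μ * (m + 2 : ℕ) / 2) = exp (-μ) * exp (-μ * m / 2) := by
    rw [← exp_add]
    push_cast
    ring_nf
  calc growthRate μ x * w μ N m
      ≤ growthRate μ (m / N) * w μ N m :=
        mul_le_mul_of_nonneg_right
          (growthRate_antitoneOn μ ⟨hfrac, hmx'.trans hx⟩ ⟨hfrac.trans_le hmx', hx⟩ hmx')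
          (w_pos μ N m).le
    _ = exp (-μ) * exp (-μ * m / 2) * (6 * ((N - m) / (N + m)) ^ 2 * C0 N m) := by
        rw [hrate, w]
        ring
    _ ≤ exp (-μ) * exp (-μ * m / 2) * C0 N (m + 2) := by
        gcongr
        exact C0_mul_le_C0_add_two hm hmN hpar
    _ = w μ N (m + 2) := by rw [w, hexp]

theorem growthRate_pow_mul_w_le (μ : ℝ) {x : ℝ} {N m k : ℕ} (hx : x ≤ 1) (hm : 2 ≤ m)
    (hpar : m ≡ N [MOD 2]) (hmx : m + 2 * k ≤ x * N) :
    growthRate μ x ^ k * w μ N m ≤ w μ N (m + 2 * k) := by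
  refine geom_le (u := fun i => w μ N (m + 2 * i)) (growthRate_nonneg μ x) k fun i hi => ?_
  have hik : ((m + 2 * i + 2 : ℕ) : ℝ) ≤ m + 2 * k := by
    exact_mod_cast (by omega : m + 2 * i + 2 ≤ m + 2 * k)
  have hfit : ((m + 2 * i + 2 : ℕ) : ℝ) ≤ x * N := hik.trans hmx
  refine growthRate_mul_w_le_w_add_two μ hx (by omega) ?_ ?_ ?_
  · exact_mod_cast hfit.trans (mul_le_of_le_one_left N.cast_nonneg hx)
  · simpa [Nat.ModEq, Nat.add_mod] using hpar
  · push_cast at hfit ⊢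
    linarith

/-- The boundary lengths over which `Θ μ₁ N` sums, that is, the support of `P μ₁ N`. -/
def boundaryLengths (N : ℕ) : Finset ℕ :=
  (Finset.range (N + 1)).filter fun m => Even m ∧ 2 ≤ m

theorem mem_boundaryLengths {N m : ℕ} : m ∈ boundaryLengths N ↔ m ≤ N ∧ Even m ∧ 2 ≤ m := by
  simp [boundaryLengths]

theorem Θ_eq_sum_boundaryLengths (μ : ℝ) (N : ℕ) : Θ μ N = ∑ m ∈ boundaryLengths N, w μ N m :=
  rfl

theorem Θ_pos (μ : ℝ) {N : ℕ} (hN : 2 ≤ N) : 0 < Θ μ N := by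
  rw [Θ_eq_sum_boundaryLengths]
  exact Finset.sum_pos (fun m _ => w_pos μ N m)
    ⟨2, mem_boundaryLengths.2 ⟨hN, even_two, le_rfl⟩⟩

theorem P_nonneg (μ : ℝ) (N m : ℕ) : 0 ≤ P μ N m :=
  div_nonneg (w_pos μ N m).le (Finset.sum_nonneg fun m _ => (w_pos μ N m).le)

theorem sum_P_eq_one (μ : ℝ) {N : ℕ} (hN : 2 ≤ N) : ∑ m ∈ boundaryLengths N, P μ N m = 1 := by
  simp only [P, ← Finset.sum_div, ← Θ_eq_sum_boundaryLengths]
  exact div_self (Θ_pos μ hN).ne'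

theorem growthRate_pow_mul_sum_w_le_Θ (μ : ℝ) {x : ℝ} {N : ℕ} (hx : x ≤ 1) (hN : Even N) (k : ℕ) :
    growthRate μ x ^ k * ∑ m ∈ boundaryLengths N with ((m : ℕ) + 2 * k : ℝ) ≤ x * N, w μ N m ≤
      Θ μ N := by
  rw [Θ_eq_sum_boundaryLengths]
  refine mul_sum_le_sum_of_injOn (· + 2 * k) ?_ (add_left_injective _).injOn ?_
    fun m _ => (w_pos μ N m).le
  · intro m hm
    obtain ⟨hm, hmx⟩ := Finset.mem_filter.1 hm
    obtain ⟨-, heven, htwo⟩ := mem_boundaryLengths.1 hm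
    refine mem_boundaryLengths.2 ⟨?_, heven.add (even_two_mul k), htwo.trans (Nat.le_add_right _ _)⟩
    exact_mod_cast hmx.trans (mul_le_of_le_one_left N.cast_nonneg hx)
  · intro m hm
    obtain ⟨hm, hmx⟩ := Finset.mem_filter.1 hm
    obtain ⟨-, heven, htwo⟩ := mem_boundaryLengths.1 hm
    refine growthRate_pow_mul_w_le μ hx htwo ?_ hmx
    rw [Nat.ModEq, Nat.even_iff.1 heven, Nat.even_iff.1 hN]

theorem sum_P_lt_le {μ ε x : ℝ} {N : ℕ} (hεx : ε ≤ x) (hx : x ≤ 1) (hr : 0 < growthRate μ x)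
    (hN : Even N) (hN₂ : 2 ≤ N) :
    ∑ m ∈ boundaryLengths N with ((m : ℕ) : ℝ) < ε * N, P μ N m ≤
      (growthRate μ x)⁻¹ ^ ⌊(x - ε) / 2 * N⌋₊ := by
  have hfloor : (⌊(x - ε) / 2 * N⌋₊ : ℝ) ≤ (x - ε) / 2 * N :=
    Nat.floor_le (mul_nonneg (by linarith) N.cast_nonneg)
  have hshort : ∑ m ∈ boundaryLengths N with ((m : ℕ) : ℝ) < ε * N, w μ N m ≤
      ∑ m ∈ boundaryLengths N with ((m : ℕ) + 2 * ⌊(x - ε) / 2 * N⌋₊ : ℝ) ≤ x * N, w μ N m := by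
    refine Finset.sum_le_sum_of_subset_of_nonneg ?_ fun m _ _ => (w_pos μ N m).le
    exact Finset.monotone_filter_right _ fun m _ hm => by linarith
  simp only [P, ← Finset.sum_div]
  rw [div_le_iff₀ (Θ_pos μ hN₂), inv_pow, le_inv_mul_iff₀ (pow_pos hr _)]
  exact (mul_le_mul_of_nonneg_left hshort (pow_pos hr _).le).trans
    (growthRate_pow_mul_sum_w_le_Θ μ hx hN _)

theorem eventually_even_and_two_le : ∀ᶠ N in evenAtTop, Even N ∧ 2 ≤ N :=
  ((eventually_principal.2 fun _ hN => hN).filter_mono inf_le_right).and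
    ((eventually_ge_atTop 2).filter_mono inf_le_left)

theorem tendsto_sum_P_lt {μ ε x : ℝ} (hεx : ε < x) (hx : x ≤ 1) (hr : 1 < growthRate μ x) :
    Tendsto (fun N : ℕ => ∑ m ∈ boundaryLengths N with ((m : ℕ) : ℝ) < ε * N, P μ N m)
      evenAtTop (𝓝 0) := by
  have hr₀ : 0 < growthRate μ x := one_pos.trans hr
  have hfloor : Tendsto (fun N : ℕ => ⌊(x - ε) / 2 * N⌋₊) evenAtTop atTop :=
    (tendsto_nat_floor_atTop.comp
      (tendsto_natCast_atTop_atTop.const_mul_atTop (by linarith))).mono_left inf_le_left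
  have hgeom : Tendsto (fun N : ℕ => (growthRate μ x)⁻¹ ^ ⌊(x - ε) / 2 * N⌋₊) evenAtTop (𝓝 0) :=
    (tendsto_pow_atTop_nhds_zero_of_lt_one (inv_pos.2 hr₀).le
      (inv_lt_one_of_one_lt₀ hr)).comp hfloor
  refine squeeze_zero' (Eventually.of_forall fun N => Finset.sum_nonneg fun m _ => P_nonneg μ N m)
    ?_ hgeom
  filter_upwards [eventually_even_and_two_le] with N hN
  exact sum_P_lt_le hεx.le hx hr₀ hN.1 hN.2

theorem sum_P_ge_eq_one_sub (μ t : ℝ) {N : ℕ} (hN : 2 ≤ N) :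
    ∑ m ∈ boundaryLengths N with t ≤ ((m : ℕ) : ℝ), P μ N m =
      1 - ∑ m ∈ boundaryLengths N with ((m : ℕ) : ℝ) < t, P μ N m := by
  rw [← sum_P_eq_one μ hN, eq_sub_iff_add_eq]
  simpa only [not_le] using
    Finset.sum_filter_add_sum_filter_not (boundaryLengths N) (fun m : ℕ => t ≤ m) (P μ N)

/-- Supercritical (elongated) phase: for some ε > 0, the probability that the boundary
length is at least εN tends to 1 along even N → ∞. -/
theorem supercritical_phase (μ₁ : ℝ) (hμ : μ₁ < Real.log 6) :
    ∃ ε : ℝ, 0 < ε ∧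
      Filter.Tendsto
        (fun N : ℕ =>
          ∑ m ∈ (Finset.range (N + 1)).filter
              (fun m : ℕ => Even m ∧ 2 ≤ m ∧ ε * (N : ℝ) ≤ (m : ℝ)), P μ₁ N m)
        evenAtTop (nhds 1) := by
  obtain ⟨x, hx, hr⟩ := exists_one_lt_growthRate hμ
  refine ⟨x / 2, half_pos hx.1, ?_⟩
  have hlong := (tendsto_sum_P_lt (half_lt_self hx.1) hx.2.le hr).const_sub 1
  rw [sub_zero] at hlong
  refine hlong.congr' ?_
  filter_upwards [eventually_even_and_two_le] with N hN
  rw [← sum_P_ge_eq_one_sub μ₁ _ hN.2, boundaryLengths, Finset.filter_filter]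
  simp only [and_assoc]
end
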